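/- For lattice polytopes P_1, ..., P_n in R^n, the normalized mixed volume satisfies MV(P_1,...,P_n) = sum over all subsets I of [n] of (-1)^(n-|I|) times the number of lattice points in the Minkowski sum P_I (where P_∅ = {0} contributes 1). -/

import Mathlib

open scoped Pointwise
open MeasureTheory Finset

def IsLatticePt {n : ℕ} (x : Fin n → ℝ) : Prop := ∀ i, ∃ z : ℤ, x i = (z : ℝ)

def IsLatticePolytope {n : ℕ} (P : Set (Fin n → ℝ)) : Prop :=
  ∃ V : Finset (Fin n → ℝ), V.Nonempty ∧ (∀ v ∈ V, IsLatticePt v) ∧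
    P = convexHull ℝ (V : Set (Fin n → ℝ))

noncomputable def adim {n : ℕ} (A : Set (Fin n → ℝ)) : ℕ :=
  Module.finrank ℝ (affineSpan ℝ A).direction

def relintLat {n : ℕ} (A : Set (Fin n → ℝ)) : Set (Fin n → ℝ) :=
  {x ∈ intrinsicInterior ℝ A | IsLatticePt x}

def intLat {n : ℕ} (A : Set (Fin n → ℝ)) : Set (Fin n → ℝ) :=
  {x ∈ interior A | IsLatticePt x}

noncomputable def mixedVol {n m : ℕ} (P : Fin m → Set (Fin n → ℝ)) : ℝ :=
  ∑ I : Finset (Fin m), (-1 : ℝ) ^ (m - I.card) * (volume (∑ i ∈ I, P i)).toReal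

def LexLt {N : ℕ} (c c' : Fin N → ℝ) : Prop := ∃ k, (∀ j < k, c j = c' j) ∧ c k < c' k

theorem LexLt.asymm {N : ℕ} {c c' : Fin N → ℝ} (h : LexLt c c') (h' : LexLt c' c) : False := by
  obtain ⟨k, hk, hk'⟩ := h
  obtain ⟨l, hl, hl'⟩ := h'
  rcases lt_trichotomy k l with h | h | h
  · have := hl k h; linarith
  · subst h; linarith
  · have := hk l h; linarith

theorem LexLt.of_ne {N : ℕ} {c c' : Fin N → ℝ} (h : c ≠ c') : LexLt c c' ∨ LexLt c' c := by
  classical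
  obtain ⟨k0, hk0⟩ := Function.ne_iff.mp h
  obtain ⟨k, hk, hmin⟩ := Finset.exists_min_image (Finset.univ.filter fun k => c k ≠ c' k) id
    ⟨k0, by simp [hk0]⟩
  have hk' : c k ≠ c' k := by simpa using hk
  have hlt : ∀ j < k, c j = c' j := by
    intro j hj
    by_contra hne
    have := hmin j (by simp [hne])
    exact absurd hj (not_lt.mpr this)
  rcases lt_or_gt_of_ne hk' with h1 | h1
  · exact Or.inl ⟨k, hlt, h1⟩
  · exact Or.inr ⟨k, fun j hj => (hlt j hj).symm, h1⟩

theorem exists_lex_min {N : ℕ} (K : Set (Fin N → ℝ)) (hK : IsCompact K) (hne : K.Nonempty) :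
    ∃ c ∈ K, ∀ c' ∈ K, c' ≠ c → LexLt c c' := by
  have main : ∀ k : ℕ, k ≤ N → ∃ K' ⊆ K, IsCompact K' ∧ K'.Nonempty ∧
      (∀ c ∈ K', ∀ c' ∈ K, c' ∈ K' ∨ LexLt c c') ∧
      (∀ c ∈ K', ∀ c' ∈ K', ∀ j : Fin N, j.val < k → c j = c' j) := by
    intro k
    induction k with
    | zero => 
      intro _
      exact ⟨K, subset_rfl, hK, hne, fun c _ c' h => Or.inl h, fun _ _ _ _ j hj => by omega⟩
    | succ k ih =>
      intro hk
      obtain ⟨K', hsub, hc, hn, h1, h2⟩ := ih (by omega)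
      let kk : Fin N := ⟨k, by omega⟩
      obtain ⟨c0, hc0, hmin⟩ := hc.exists_isMinOn hn (continuous_apply kk).continuousOn
      refine ⟨K' ∩ {c | c kk = c0 kk}, fun c h => hsub h.1,
        hc.inter_right (isClosed_eq (continuous_apply kk) continuous_const), ⟨c0, hc0, rfl⟩, ?_, ?_⟩
      · rintro c ⟨hcK, hck⟩ c' hc'
        rcases h1 c hcK c' hc' with h | h
        · by_cases he : c' kk = c0 kk
          · exact Or.inl ⟨h, he⟩
          · right
            refine ⟨kk, fun j hj => h2 c hcK c' h j hj, ?_⟩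
            have := hmin h
            simp only [Set.mem_ofPred_eq] at this hck
            rw [hck]
            exact lt_of_le_of_ne this (Ne.symm he)
        · exact Or.inr h
      · rintro c ⟨hcK, hck⟩ c' ⟨hcK', hck'⟩ j hj
        rcases Nat.lt_succ_iff_lt_or_eq.mp hj with h | h
        · exact h2 c hcK c' hcK' j h
        · have : j = kk := Fin.ext h
          subst this
          exact hck.trans hck'.symm
  obtain ⟨K', hsub, -, ⟨c, hc⟩, h1, h2⟩ := main N le_rfl
  refine ⟨c, hsub hc, fun c' hc' hne => ?_⟩
  rcases h1 c hc c' hc' with h | h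
  · exact absurd (funext fun j => h2 c' h c hc j j.2) hne
  · exact h

/-- lexicographically minimal among nonnegative representations of the same vector -/
def LexOpt {N : ℕ} {E : Type*} [AddCommGroup E] [Module ℝ E] (g : Fin N → E)
    (c : Fin N → ℝ) : Prop :=
  ∀ c' : Fin N → ℝ, 0 ≤ c' → ∑ j, c' j • g j = ∑ j, c j • g j → c' ≠ c → LexLt c c'

section
variable {N : ℕ} {E : Type*} [AddCommGroup E] [Module ℝ E] {g : Fin N → E}

theorem LexOpt.unique {c c' : Fin N → ℝ} (h : LexOpt g c) (h' : LexOpt g c') (hc : 0 ≤ c)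
    (hc' : 0 ≤ c') (he : ∑ j, c j • g j = ∑ j, c' j • g j) : c = c' := by
  by_contra hne
  exact (h c' hc' he.symm (Ne.symm hne)).asymm (h' c hc he hne)

/-- small steps keep nonnegativity -/
theorem exists_small_step {c d : Fin N → ℝ} (hc : 0 ≤ c) (hd : ∀ j, c j = 0 → 0 ≤ d j) :
    ∃ t : ℝ, 0 < t ∧ 0 ≤ c + t • d := by
  have : ∀ j, ∀ᶠ t : ℝ in nhdsWithin 0 (Set.Ioi 0), 0 ≤ c j + t * d j := by
    intro j
    rcases (hc j).eq_or_lt with h | h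
    · filter_upwards [self_mem_nhdsWithin] with t ht
      have h0 : c j = 0 := h.symm
      rw [h0, zero_add]
      exact mul_nonneg (le_of_lt ht) (hd j h0)
    · have hcont : Filter.Tendsto (fun t : ℝ => c j + t * d j) (nhdsWithin 0 (Set.Ioi 0))
          (nhds (c j + 0 * d j)) :=
        (Continuous.tendsto (by fun_prop) 0).mono_left nhdsWithin_le_nhds
      rw [zero_mul, add_zero] at hcont
      filter_upwards [hcont.eventually (lt_mem_nhds h)] with t ht using ht.le
  have h2 := (Filter.eventually_all.mpr this).and self_mem_nhdsWithin
  obtain ⟨t, ht, ht'⟩ := h2.exists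
  exact ⟨t, ht', fun j => by simpa using ht j⟩

theorem LexOpt.not_improve {c d : Fin N → ℝ} (h : LexOpt g c) (hc : 0 ≤ c)
    (hd : ∀ j, c j = 0 → 0 ≤ d j) (hs : ∑ j, d j • g j = 0) (hlex : LexLt d 0) : False := by
  obtain ⟨t, ht, hpos⟩ := exists_small_step hc hd
  obtain ⟨k, hk, hk'⟩ := hlex
  simp only [Pi.zero_apply] at hk hk'
  have hl : LexLt (c + t • d) c := by
    refine ⟨k, fun j hj => by simp [hk j hj], ?_⟩
    simp only [Pi.add_apply, Pi.smul_apply, smul_eq_mul]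
    nlinarith
  refine hl.asymm (h _ hpos ?_ ?_)
  · simp only [Pi.add_apply, Pi.smul_apply, smul_eq_mul, add_smul, mul_smul,
      Finset.sum_add_distrib, ← Finset.smul_sum, hs, smul_zero, add_zero]
  · intro he
    rw [he] at hl
    exact hl.asymm hl

theorem LexOpt.linearIndependent {c : Fin N → ℝ} (h : LexOpt g c) (hc : 0 ≤ c) :
    LinearIndepOn ℝ g {j | c j ≠ 0} := by
  classical
  rw [linearIndepOn_iff'']
  intro s d hs hd hsum j hj
  by_contra hne
  have hdne : d ≠ 0 := fun h0 => hne (by rw [h0]; rfl)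
  have hsum' : ∑ j, d j • g j = 0 := by
    rw [← hsum]
    symm
    apply Finset.sum_subset (Finset.subset_univ _)
    intro x _ hx
    rw [hd x hx, zero_smul]
  have hz : ∀ j, c j = 0 → d j = 0 := by
    intro j hj0
    by_cases hjs : j ∈ s
    · exact absurd hj0 (hs hjs)
    · exact hd j hjs
  rcases LexLt.of_ne hdne with h1 | h1
  · exact h.not_improve hc (fun j hj => (hz j hj).ge) hsum' h1
  · refine h.not_improve (d := -d) hc (fun j hj => by simp [hz j hj]) (by simp [hsum']) ?_
    obtain ⟨k, hk, hk'⟩ := h1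
    exact ⟨k, fun j hj => by simp [← hk j hj], by simpa using hk'⟩

theorem LexOpt.of_supp {c c' : Fin N → ℝ} (h : LexOpt g c) (hc : 0 ≤ c)
    (hs : ∀ j, c j = 0 → c' j = 0) : LexOpt g c' := by
  intro c'' hc'' he hne
  rcases LexLt.of_ne hne with h1 | h1
  · exfalso
    refine h.not_improve (d := c'' - c') hc (fun j hj => ?_) ?_ ?_
    · simp [hs j hj]; exact hc'' j
    · simp [sub_smul, he]
    · obtain ⟨k, hk, hk'⟩ := h1
      exact ⟨k, fun j hj => by simp [hk j hj], by simpa using hk'⟩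
  · exact h1
end

section
set_option linter.unusedSectionVars false
variable {N n : ℕ} {κ : Type*} [Fintype κ] [DecidableEq κ]

/-- Cayley generators -/
def cayGen (col : Fin N → κ) (v : Fin N → Fin n → ℝ) (j : Fin N) : (Fin n → ℝ) × (κ → ℝ) :=
  (v j, Pi.single (col j) 1)

theorem cay_sum_fst (col : Fin N → κ) (v : Fin N → Fin n → ℝ) (c : Fin N → ℝ) :
    (∑ j, c j • cayGen col v j).1 = ∑ j, c j • v j := by
  simp [cayGen, Prod.fst_sum]

theorem cay_sum_snd (col : Fin N → κ) (v : Fin N → Fin n → ℝ) (c : Fin N → ℝ) (i : κ) :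
    (∑ j, c j • cayGen col v j).2 i = ∑ j with col j = i, c j := by
  simp [cayGen, Prod.snd_sum, Finset.sum_apply, Pi.single_apply, Finset.sum_filter, eq_comm]

theorem le_height (col : Fin N → κ) (v : Fin N → Fin n → ℝ) {c : Fin N → ℝ} (hc : 0 ≤ c)
    (j : Fin N) : c j ≤ (∑ j, c j • cayGen col v j).2 (col j) := by
  rw [cay_sum_snd]
  exact Finset.single_le_sum (f := c) (fun i _ => hc i) (by simp)

theorem cay_continuous (col : Fin N → κ) (v : Fin N → Fin n → ℝ) :
    Continuous fun c : Fin N → ℝ => ∑ j, c j • cayGen col v j := by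
  fun_prop

theorem exists_lexOpt (col : Fin N → κ) (v : Fin N → Fin n → ℝ) {c0 : Fin N → ℝ} (hc0 : 0 ≤ c0) :
    ∃ c : Fin N → ℝ, 0 ≤ c ∧ ∑ j, c j • cayGen col v j = ∑ j, c0 j • cayGen col v j ∧
      LexOpt (cayGen col v) c := by
  set y := ∑ j, c0 j • cayGen col v j with hy
  have hcomp : IsCompact (Set.Icc (0 : Fin N → ℝ) (fun j => y.2 (col j)) ∩
      {c | ∑ j, c j • cayGen col v j = y}) :=
    isCompact_Icc.inter_right (isClosed_eq (cay_continuous col v) continuous_const)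
  have hmem : ∀ c : Fin N → ℝ, 0 ≤ c → ∑ j, c j • cayGen col v j = y →
      c ∈ (Set.Icc (0 : Fin N → ℝ) (fun j => y.2 (col j)) ∩
      {c | ∑ j, c j • cayGen col v j = y}) := fun c hc he =>
    ⟨⟨hc, fun j => by rw [← he]; exact le_height col v hc j⟩, he⟩
  obtain ⟨c, hc, hmin⟩ := exists_lex_min _ hcomp ⟨c0, hmem c0 hc0 rfl⟩
  refine ⟨c, hc.1.1, hc.2, fun c' hc' he hne => hmin c' (hmem c' hc' ?_) hne⟩
  rw [he]; exact hc.2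

theorem exists_unique_color (col : Fin N → κ) (v : Fin N → Fin n → ℝ) (hκ : n < Fintype.card κ)
    {c : Fin N → ℝ} (hc : 0 ≤ c) (hopt : LexOpt (cayGen col v) c)
    (hpos : ∀ i, 0 < (∑ j, c j • cayGen col v j).2 i) :
    ∃ j, c j ≠ 0 ∧ ∀ j', c j' ≠ 0 → col j' = col j → j' = j := by
  classical
  by_contra hcon
  push Not at hcon
  have hli := hopt.linearIndependent hc
  have hcard : (Finset.univ.filter fun j => c j ≠ 0).card ≤ n + Fintype.card κ := by
    have h1 := LinearIndependent.fintype_card_le_finrank hli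
    simp only [Module.finrank_prod, Module.finrank_fintype_fun_eq_card, Fintype.card_fin] at h1
    rw [Fintype.card_subtype] at h1
    convert h1
  have h2 : ∀ i ∈ (Finset.univ : Finset κ), 2 ≤ (Finset.univ.filter fun j => c j ≠ 0 ∧ col j = i).card := by
    intro i _
    have := hpos i
    rw [cay_sum_snd] at this
    obtain ⟨j, hj, hj0⟩ := Finset.exists_ne_zero_of_sum_ne_zero this.ne'
    have hj' : col j = i := by simpa using hj
    obtain ⟨j', h1, h2, h3⟩ := hcon j hj0
    rw [← Nat.succ_le_iff.eq, Nat.succ_le_iff] at *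
    apply Finset.one_lt_card.mpr
    exact ⟨j, by simp [hj0, hj'], j', by simp [h1, h2, hj'], h3.symm⟩
  have h3 := Finset.card_eq_sum_card_fiberwise (s := Finset.univ.filter fun j => c j ≠ 0)
    (t := Finset.univ) (f := col) (fun _ _ => by simp)
  simp only [Finset.filter_filter] at h3
  have h4 := Finset.sum_le_sum h2
  rw [← h3] at h4
  simp at h4
  simp at hcard
  omega
end

theorem isLatticePt_iff {n : ℕ} (x : Fin n → ℝ) :
    IsLatticePt x ↔ x ∈ (Submodule.span ℤ (Set.range (Pi.basisFun ℝ (Fin n)))) := by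
  rw [Module.Basis.mem_span_iff_repr_mem]
  simp only [IsLatticePt, Pi.basisFun_repr, Set.mem_range, algebraMap_int_eq, Int.coe_castRingHom]
  exact forall_congr' fun i => exists_congr fun z => eq_comm

theorem finite_lattice {n : ℕ} {s : Set (Fin n → ℝ)} (hs : Bornology.IsBounded s) :
    {x ∈ s | IsLatticePt x}.Finite := by
  have := ZSpan.setFinite_inter (Pi.basisFun ℝ (Fin n)) hs
  refine this.subset fun x hx => ⟨hx.1, ?_⟩
  exact (isLatticePt_iff x).mp hx.2

theorem IsLatticePt.add {n : ℕ} {x y : Fin n → ℝ} (hx : IsLatticePt x) (hy : IsLatticePt y) :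
    IsLatticePt (x + y) := by
  rw [isLatticePt_iff] at *; exact add_mem hx hy

theorem IsLatticePt.sub {n : ℕ} {x y : Fin n → ℝ} (hx : IsLatticePt x) (hy : IsLatticePt y) :
    IsLatticePt (x - y) := by
  rw [isLatticePt_iff] at *; exact sub_mem hx hy

section
set_option linter.unusedSectionVars false
variable {N n : ℕ} {κ : Type*} [Fintype κ] [DecidableEq κ]

def indH (I : Finset κ) : κ → ℝ := fun i => if i ∈ I then 1 else 0

/-- the cone over the Cayley configuration -/
def cayCone (col : Fin N → κ) (v : Fin N → Fin n → ℝ) : Set ((Fin n → ℝ) × (κ → ℝ)) :=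
  {y | ∃ c : Fin N → ℝ, 0 ≤ c ∧ ∑ j, c j • cayGen col v j = y}

def cayX (col : Fin N → κ) (v : Fin N → Fin n → ℝ) (I : Finset κ) : Set (Fin n → ℝ) :=
  {a | (a, indH I) ∈ cayCone col v ∧ IsLatticePt a}

theorem cayX_finite (col : Fin N → κ) (v : Fin N → Fin n → ℝ) (I : Finset κ) :
    (cayX col v I).Finite := by
  have hc : IsCompact ((fun c : Fin N → ℝ => (∑ j, c j • cayGen col v j).1) ''
      Set.Icc (0 : Fin N → ℝ) 1) :=
    isCompact_Icc.image (continuous_fst.comp (cay_continuous col v))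
  refine (finite_lattice hc.isBounded).subset ?_
  rintro a ⟨⟨c, hc, he⟩, hl⟩
  refine ⟨⟨c, ⟨hc, fun j => ?_⟩, by simp [he]⟩, hl⟩
  have := le_height col v hc j
  rw [he] at this
  refine this.trans ?_
  simp only [indH]; split_ifs <;> simp

theorem cay_small (col : Fin N → κ) (v : Fin N → Fin n → ℝ) (J : Finset κ) (a : Fin n → ℝ) :
    ∀ᶠ ε : ℝ in nhdsWithin 0 (Set.Ioi 0),
      (a, indH J) + ε • (∑ j, cayGen col v j) ∈ cayCone col v → (a, indH J) ∈ cayCone col v := by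
  by_cases ha : (a, indH J) ∈ cayCone col v
  · exact Filter.Eventually.of_forall fun _ _ => ha
  set F := (fun c : Fin N → ℝ => ∑ j, c j • cayGen col v j) ''
      Set.Icc (0 : Fin N → ℝ) (fun _ => 1 + (N : ℝ)) with hF
  have hFc : IsClosed F := (isCompact_Icc.image (cay_continuous col v)).isClosed
  have haF : (a, indH J) ∉ F := by
    rintro ⟨c, hc, he⟩
    exact ha ⟨c, hc.1, he⟩
  have hcont : Filter.Tendsto (fun ε : ℝ => (a, indH J) + ε • (∑ j, cayGen col v j))
      (nhdsWithin 0 (Set.Ioi 0)) (nhds ((a, indH J) + (0:ℝ) • (∑ j, cayGen col v j))) :=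
    (Continuous.tendsto (by fun_prop) 0).mono_left nhdsWithin_le_nhds
  rw [zero_smul, add_zero] at hcont
  have h1 := hcont.eventually (hFc.isOpen_compl.mem_nhds haF)
  have h2 : ∀ᶠ ε : ℝ in nhdsWithin 0 (Set.Ioi 0), ε ≤ 1 :=
    nhdsWithin_le_nhds (Iic_mem_nhds (by norm_num))
  filter_upwards [h1, h2, self_mem_nhdsWithin] with ε h1 h2 h3
  rintro ⟨c, hc, he⟩
  refine absurd ⟨c, ⟨hc, fun j => ?_⟩, he⟩ h1
  have h4 := le_height col v hc j
  rw [he] at h4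
  refine h4.trans ?_
  have h5 := cay_sum_snd col v (fun _ => 1) (col j)
  simp only [one_smul] at h5
  simp only [Prod.snd_add, Prod.smul_snd, Pi.add_apply, Pi.smul_apply, smul_eq_mul, h5]
  have h6 : indH J (col j) ≤ 1 := by simp only [indH]; split_ifs <;> simp
  have h7 : (∑ j' with col j' = col j, (1:ℝ)) ≤ N := by
    simp only [Finset.sum_const, nsmul_eq_mul, mul_one]
    exact_mod_cast (Finset.card_le_univ _).trans (by simp)
  have h8 : 0 ≤ (∑ j' with col j' = col j, (1:ℝ)) := by positivity
  have h9 : (0:ℝ) < ε := h3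
  nlinarith

theorem indH_erase {I : Finset κ} {i : κ} (hi : i ∈ I) :
    indH (I.erase i) = indH I - Pi.single i 1 := by
  funext k
  simp only [indH, Finset.mem_erase, Pi.sub_apply, Pi.single_apply]
  by_cases h : k = i
  · subst h; simp [hi]
  · simp [h]

theorem indH_insert {I : Finset κ} {i : κ} (hi : i ∉ I) :
    indH (insert i I) = indH I + Pi.single i 1 := by
  funext k
  simp only [indH, Finset.mem_insert, Pi.add_apply, Pi.single_apply]
  by_cases h : k = i
  · subst h; simp [hi]
  · simp [h]

theorem cay_sum_single (col : Fin N → κ) (v : Fin N → Fin n → ℝ) (j : Fin N) :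
    ∑ k, (Pi.single j (1:ℝ) : Fin N → ℝ) k • cayGen col v k = cayGen col v j := by
  simp [Pi.single_apply]

theorem cay_alternating (col : Fin N → κ) (v : Fin N → Fin n → ℝ) (hκ : n < Fintype.card κ)
    (hv : ∀ j, IsLatticePt (v j)) (hcol : ∀ i, ∃ j, col j = i) :
    ∑ I : Finset κ, (-1 : ℝ) ^ I.card * ((cayX col v I).ncard : ℝ) = 0 := by
  classical
  have hκne : Nonempty κ := Fintype.card_pos_iff.mp (by omega)
  have hN : Nonempty (Fin N) := let ⟨j, _⟩ := hcol hκne.some; ⟨j⟩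
  set q0 := ∑ j, cayGen col v j with hq0
  -- heights of q0
  have hq0pos : ∀ i, 0 < q0.2 i := by
    intro i
    have h5 := cay_sum_snd col v (fun _ => 1) i
    simp only [one_smul] at h5
    rw [hq0, h5]
    obtain ⟨j, hj⟩ := hcol i
    exact Finset.sum_pos (fun _ _ => one_pos) ⟨j, by simp [hj]⟩
  -- choice of ε
  obtain ⟨ε, hε, hsmall⟩ : ∃ ε : ℝ, 0 < ε ∧ ∀ (J I : Finset κ) (j : Fin N), ∀ b ∈ cayX col v I,
      (b - v j, indH J) + ε • q0 ∈ cayCone col v → (b - v j, indH J) ∈ cayCone col v := by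
    have h1 : ∀ᶠ ε : ℝ in nhdsWithin 0 (Set.Ioi 0), ∀ (J I : Finset κ) (j : Fin N),
        ∀ b ∈ cayX col v I,
        (b - v j, indH J) + ε • q0 ∈ cayCone col v → (b - v j, indH J) ∈ cayCone col v := by
      refine Filter.eventually_all.mpr fun J => Filter.eventually_all.mpr fun I =>
        Filter.eventually_all.mpr fun j => ?_
      refine (Filter.eventually_all_finite (cayX_finite col v I)).mpr fun b _ => ?_
      exact cay_small col v J (b - v j)
    obtain ⟨ε, h2, h3⟩ := (h1.and self_mem_nhdsWithin).exists
    exact ⟨ε, h3, h2⟩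
  -- canonical representation
  have hex : ∀ p : (_ : Finset κ) × (Fin n → ℝ), ∃ c : Fin N → ℝ, p.2 ∈ cayX col v p.1 →
      0 ≤ c ∧ ∑ j, c j • cayGen col v j = (p.2, indH p.1) + ε • q0 ∧ LexOpt (cayGen col v) c := by
    intro p
    by_cases hp : p.2 ∈ cayX col v p.1
    · obtain ⟨⟨c, hc, he⟩, -⟩ := hp
      obtain ⟨c', h1, h2, h3⟩ := exists_lexOpt col v (c0 := c + fun _ => ε)
        (fun j => add_nonneg (hc j) hε.le)
      refine ⟨c', fun _ => ⟨h1, ?_, h3⟩⟩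
      rw [h2, ← he, hq0]
      simp [add_smul, Finset.sum_add_distrib, Finset.smul_sum]
    · exact ⟨0, fun h => absurd h hp⟩
  choose cc hcc using hex
  have hpick : ∀ S : Finset (Fin N), ∃ j, (∃ j ∈ S, ∀ j' ∈ S, col j' = col j → j' = j) →
      (j ∈ S ∧ ∀ j' ∈ S, col j' = col j → j' = j) := by
    intro S
    by_cases h : ∃ j ∈ S, ∀ j' ∈ S, col j' = col j → j' = j
    · obtain ⟨j, hj⟩ := h
      exact ⟨j, fun _ => hj⟩
    · exact ⟨hN.some, fun h' => absurd h' h⟩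
  choose pick hpick using hpick
  let supp : (Fin N → ℝ) → Finset (Fin N) := fun c => Finset.univ.filter fun j => c j ≠ 0
  let jj : (_ : Finset κ) × (Fin n → ℝ) → Fin N := fun p => pick (supp (cc p))
  have hjj : ∀ p : (_ : Finset κ) × (Fin n → ℝ), p.2 ∈ cayX col v p.1 →
      cc p (jj p) ≠ 0 ∧ ∀ j', cc p j' ≠ 0 → col j' = col (jj p) → j' = jj p := by
    intro p hp
    obtain ⟨h1, h2, h3⟩ := hcc p hp
    obtain ⟨j, hj, hj'⟩ := exists_unique_color col v hκ h1 h3 (by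
      intro i
      rw [h2]
      simp only [Prod.snd_add, Prod.smul_snd, Pi.add_apply, Pi.smul_apply, smul_eq_mul]
      have : 0 ≤ indH p.1 i := by simp only [indH]; split_ifs <;> simp
      have := mul_pos hε (hq0pos i)
      linarith)
    have := hpick (supp (cc p)) ⟨j, by simp [supp, hj], fun j' h => hj' j' (by simpa [supp] using h)⟩
    exact ⟨by simpa [supp] using this.1, fun j' h => this.2 j' (by simpa [supp] using h)⟩
  let g : (_ : Finset κ) × (Fin n → ℝ) → (_ : Finset κ) × (Fin n → ℝ) := fun p =>
    if col (jj p) ∈ p.1 then ⟨p.1.erase (col (jj p)), p.2 - v (jj p)⟩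
    else ⟨insert (col (jj p)) p.1, p.2 + v (jj p)⟩
  have key : ∀ p : (_ : Finset κ) × (Fin n → ℝ), p.2 ∈ cayX col v p.1 →
      (g p).2 ∈ cayX col v (g p).1 ∧ jj (g p) = jj p := by
    intro p hp
    obtain ⟨h1, h2, h3⟩ := hcc p hp
    obtain ⟨h4, h5⟩ := hjj p hp
    -- general finishing step
    have fin : ∀ c' : Fin N → ℝ, 0 ≤ c' → (∀ j, c' j ≠ 0 ↔ cc p j ≠ 0) →
        ∑ j, c' j • cayGen col v j = ((g p).2, indH (g p).1) + ε • q0 →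
        (g p).2 ∈ cayX col v (g p).1 → jj (g p) = jj p := by
      intro c' hc' hs he hm
      obtain ⟨k1, k2, k3⟩ := hcc (g p) hm
      have hopt : LexOpt (cayGen col v) c' := h3.of_supp h1 (fun j hj => by
        by_contra hne
        exact (hs j).mp hne hj)
      have : cc (g p) = c' := k3.unique hopt k1 hc' (k2.trans he.symm)
      simp only [jj, this]
      congr 1
      ext j
      simp [supp, not_iff_not.mp (hs j)]
    by_cases hi : col (jj p) ∈ p.1
    · have hg : g p = ⟨p.1.erase (col (jj p)), p.2 - v (jj p)⟩ := by simp only [g, if_pos hi]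
      have hval : cc p (jj p) = 1 + ε * q0.2 (col (jj p)) := by
        have h6 := cay_sum_snd col v (cc p) (col (jj p))
        rw [h2] at h6
        rw [Finset.sum_eq_single (jj p)] at h6
        · rw [← h6]
          simp [indH, hi]
        · intro j' hj' hne
          by_contra h0
          exact hne (h5 j' h0 (by simpa using hj'))
        · intro h; simp at h
      have hp1 := mul_pos hε (hq0pos (col (jj p)))
      have hc' : 0 ≤ cc p - Pi.single (jj p) 1 := by
        intro j
        by_cases hj : j = jj p
        · rw [hj]; simp [hval, hp1.le]
        · simp [hj]; exact h1 j
      have he : ∑ j, (cc p - Pi.single (jj p) 1 : Fin N → ℝ) j • cayGen col v j =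
          ((g p).2, indH (g p).1) + ε • q0 := by
        simp only [Pi.sub_apply, sub_smul, Finset.sum_sub_distrib, cay_sum_single, h2, hg,
          indH_erase hi]
        simp only [cayGen]
        ext <;> simp <;> ring
      have hm : (g p).2 ∈ cayX col v (g p).1 := by
        refine ⟨?_, ?_⟩
        · have : ((g p).2, indH (g p).1) + ε • q0 ∈ cayCone col v := ⟨_, hc', he⟩
          rw [hg] at this ⊢
          exact hsmall _ p.1 _ _ hp this
        · rw [hg]; exact hp.2.sub (hv _)
      refine ⟨hm, fin _ hc' (fun j => ?_) he hm⟩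
      by_cases hj : j = jj p
      · rw [hj]; simp only [Pi.sub_apply, Pi.single_eq_same]
        rw [hval]
        constructor
        · intro _; positivity
        · intro _
          rw [add_sub_cancel_left]
          exact hp1.ne'
      · simp [hj]
    · have hg : g p = ⟨insert (col (jj p)) p.1, p.2 + v (jj p)⟩ := by simp only [g, if_neg hi]
      have hc' : 0 ≤ cc p + Pi.single (jj p) 1 := by
        intro j
        by_cases hj : j = jj p
        · rw [hj]; simp; linarith [h1 (jj p), show (0 : Fin N → ℝ) (jj p) = 0 from rfl]
        · simp [hj]; exact h1 j
      have he : ∑ j, (cc p + Pi.single (jj p) 1 : Fin N → ℝ) j • cayGen col v j =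
          ((g p).2, indH (g p).1) + ε • q0 := by
        simp only [Pi.add_apply, add_smul, Finset.sum_add_distrib, cay_sum_single, h2, hg,
          indH_insert hi]
        simp only [cayGen]
        ext <;> simp <;> ring
      have hm : (g p).2 ∈ cayX col v (g p).1 := by
        refine ⟨?_, ?_⟩
        · obtain ⟨⟨c, hc, hce⟩, -⟩ := hp
          refine ⟨c + Pi.single (jj p) 1, ?_, ?_⟩
          · intro j
            by_cases hj : j = jj p
            · rw [hj]; simp; linarith [hc (jj p), show (0 : Fin N → ℝ) (jj p) = 0 from rfl]
            · simp [hj]; exact hc j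
          · simp only [Pi.add_apply, add_smul, Finset.sum_add_distrib, cay_sum_single, hce, hg,
              indH_insert hi]
            simp only [cayGen]
            ext <;> simp
        · rw [hg]; exact hp.2.add (hv _)
      refine ⟨hm, fin _ hc' (fun j => ?_) he hm⟩
      by_cases hj : j = jj p
      · rw [hj]; simp only [Pi.add_apply, Pi.single_eq_same]
        have := h1 (jj p)
        simp only [Pi.zero_apply] at this
        exact ⟨fun _ => h4, fun _ => by positivity⟩
      · simp [hj]
  have hgg : ∀ p : (_ : Finset κ) × (Fin n → ℝ), p.2 ∈ cayX col v p.1 → g (g p) = p := by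
    intro p hp
    have hk := (key p hp).2
    by_cases hi : col (jj p) ∈ p.1
    · have hg : g p = ⟨p.1.erase (col (jj p)), p.2 - v (jj p)⟩ := by simp only [g, if_pos hi]
      have : col (jj (g p)) ∉ (g p).1 := by rw [hk, hg]; simp
      have hg2 : g (g p) = ⟨insert (col (jj (g p))) (g p).1, (g p).2 + v (jj (g p))⟩ := if_neg this
      rw [hg2, hk, hg]
      simp [Finset.insert_erase hi]
    · have hg : g p = ⟨insert (col (jj p)) p.1, p.2 + v (jj p)⟩ := by simp only [g, if_neg hi]
      have : col (jj (g p)) ∈ (g p).1 := by rw [hk, hg]; simp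
      have hg2 : g (g p) = ⟨(g p).1.erase (col (jj (g p))), (g p).2 - v (jj (g p))⟩ := if_pos this
      rw [hg2, hk, hg]
      simp [Finset.erase_insert hi]
  have hcard : ∀ p : (_ : Finset κ) × (Fin n → ℝ), 
      (-1 : ℝ) ^ p.1.card + (-1 : ℝ) ^ (g p).1.card = 0 := by
    intro p
    by_cases hi : col (jj p) ∈ p.1
    · have hg : (g p).1 = p.1.erase (col (jj p)) := by simp only [g, if_pos hi]
      rw [hg, ← Finset.card_erase_add_one hi, pow_succ]
      ring
    · have hg : (g p).1 = insert (col (jj p)) p.1 := by simp only [g, if_neg hi]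
      rw [hg, Finset.card_insert_of_notMem hi, pow_succ]
      ring
  have hsum : ∑ I : Finset κ, (-1 : ℝ) ^ I.card * ((cayX col v I).ncard : ℝ) =
      ∑ p ∈ (Finset.univ : Finset (Finset κ)).sigma (fun I => (cayX_finite col v I).toFinset),
        (-1 : ℝ) ^ p.1.card := by
    rw [Finset.sum_sigma]
    refine Finset.sum_congr rfl fun I _ => ?_
    simp only []
    rw [Finset.sum_const, Set.ncard_eq_toFinset_card _ (cayX_finite col v I), nsmul_eq_mul, mul_comm]
  rw [hsum]
  refine Finset.sum_involution (fun p _ => g p) ?_ ?_ ?_ ?_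
  · intro p _; exact hcard p
  · intro p _ h he
    have := hcard p
    rw [he] at this
    exact h (by linarith)
  · intro p hp
    have : p.2 ∈ cayX col v p.1 := by simpa using hp
    simpa using (key p this).1
  · intro p hp
    have : p.2 ∈ cayX col v p.1 := by simpa using hp
    exact hgg p this
end

theorem lattice_alternating {n : ℕ} {κ : Type*} [Fintype κ] [DecidableEq κ]
    (P : κ → Set (Fin n → ℝ)) (hP : ∀ i, IsLatticePolytope (P i)) (hκ : n < Fintype.card κ) :
    ∑ I : Finset κ, (-1 : ℝ) ^ I.card *
      (({x ∈ (∑ i ∈ I, P i) | IsLatticePt x}).ncard : ℝ) = 0 := by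
  classical
  choose V hVne hVlat hPV using hP
  let α := (i : κ) × {x // x ∈ V i}
  let e : α ≃ Fin (Fintype.card α) := Fintype.equivFin α
  let col : Fin (Fintype.card α) → κ := fun j => (e.symm j).1
  let v : Fin (Fintype.card α) → Fin n → ℝ := fun j => (e.symm j).2.1
  have hve : ∀ (i : κ) (y : {x // x ∈ V i}), v (e ⟨i, y⟩) = y.1 := fun i y =>
    congrArg (fun a : α => a.2.1) (e.symm_apply_apply ⟨i, y⟩)
  have hce : ∀ (i : κ) (y : {x // x ∈ V i}), col (e ⟨i, y⟩) = i := fun i y =>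
    congrArg (fun a : α => a.1) (e.symm_apply_apply ⟨i, y⟩)
  have h1 : ∀ c : Fin (Fintype.card α) → ℝ, (∑ j, c j • cayGen col v j).1 =
      ∑ i, ∑ y : {x // x ∈ V i}, c (e ⟨i, y⟩) • y.1 := by
    intro c
    rw [cay_sum_fst, ← e.sum_comp, Fintype.sum_sigma]
    simp only [hve]
  have h2 : ∀ (c : Fin (Fintype.card α) → ℝ) (i : κ), (∑ j, c j • cayGen col v j).2 i =
      ∑ y : {x // x ∈ V i}, c (e ⟨i, y⟩) := by
    intro c i
    rw [cay_sum_snd, Finset.sum_filter, ← e.sum_comp, Fintype.sum_sigma,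
      Finset.sum_eq_single i]
    · simp [hce]
    · intro b _ hb
      simp [hce, hb]
    · simp
  have hX : ∀ I : Finset κ, {x ∈ (∑ i ∈ I, P i) | IsLatticePt x} = cayX col v I := by
    intro I
    ext a
    refine and_congr_left fun _ => ?_
    rw [Set.mem_finsetSum]
    constructor
    · rintro ⟨f, hf, rfl⟩
      have hw : ∀ i, ∃ w : (Fin n → ℝ) → ℝ, i ∈ I → (∀ y ∈ V i, 0 ≤ w y) ∧ 
          ∑ y ∈ V i, w y = 1 ∧ ∑ y ∈ V i, w y • y = f i := by
        intro i
        by_cases hi : i ∈ I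
        · have := hf hi
          rw [hPV i, Finset.mem_convexHull'] at this
          obtain ⟨w, hw⟩ := this
          exact ⟨w, fun _ => hw⟩
        · exact ⟨0, fun h => absurd h hi⟩
      choose w hw using hw
      refine ⟨fun j => if col j ∈ I then w (col j) (v j) else 0, fun j => ?_, ?_⟩
      · simp only [Pi.zero_apply]
        split_ifs with h
        · exact (hw _ h).1 _ (e.symm j).2.2
        · exact le_rfl
      · refine Prod.ext ?_ (funext fun i => ?_)
        · rw [h1]
          simp only [hve, hce]
          rw [← Finset.sum_subset (Finset.subset_univ I)]
          · refine Finset.sum_congr rfl fun i hi => ?_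
            simp only [if_pos hi]
            rw [← (hw i hi).2.2]
            exact Finset.sum_coe_sort (V i) (fun y => w i y • y)
          · intro i _ hi
            simp [hi]
        · rw [h2]
          simp only [hve, hce, indH]
          split_ifs with hi
          · rw [← (hw i hi).2.1]
            exact Finset.sum_coe_sort (V i) (fun y => w i y)
          · simp
    · rintro ⟨c, hc, he⟩
      have k1 := h1 c
      rw [he] at k1
      have k2 := h2 c
      rw [he] at k2
      simp only at k1 k2
      refine ⟨fun i => ∑ y : {x // x ∈ V i}, c (e ⟨i, y⟩) • y.1, fun {i} hi => ?_, ?_⟩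
      · rw [hPV i]
        refine (convex_convexHull ℝ _).sum_mem (fun y _ => hc _) ?_ 
          (fun y _ => subset_convexHull ℝ _ y.2)
        rw [← k2 i]; simp [indH, hi]
      · rw [k1]
        refine Finset.sum_subset (Finset.subset_univ I) fun i _ hi => ?_
        have k3 := k2 i
        simp only [indH, if_neg hi] at k3
        have k4 := (Finset.sum_eq_zero_iff_of_nonneg (fun y _ => hc (e ⟨i, y⟩))).mp k3.symm
        exact Finset.sum_eq_zero fun y hy => by rw [k4 y hy, zero_smul]
  simp_rw [hX]
  refine cay_alternating col v hκ (fun j => hVlat _ _ (e.symm j).2.2) (fun i => ?_)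
  obtain ⟨y, hy⟩ := hVne i
  exact ⟨e ⟨i, ⟨y, hy⟩⟩, hce _ _⟩

theorem IsLatticePolytope.zero {n : ℕ} : IsLatticePolytope (0 : Set (Fin n → ℝ)) :=
  ⟨{0}, by simp, fun v hv i => ⟨0, by simp [Finset.mem_singleton.mp hv]⟩, by
    simp [Set.singleton_zero]⟩

theorem IsLatticePolytope.add {n : ℕ} {A B : Set (Fin n → ℝ)} (hA : IsLatticePolytope A)
    (hB : IsLatticePolytope B) : IsLatticePolytope (A + B) := by
  classical
  obtain ⟨V, h1, h2, rfl⟩ := hA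
  obtain ⟨W, k1, k2, rfl⟩ := hB
  refine ⟨V + W, h1.add k1, fun x hx => ?_, ?_⟩
  · obtain ⟨a, ha, b, hb, rfl⟩ := Finset.mem_add.mp hx
    exact (h2 a ha).add (k2 b hb)
  · rw [Finset.coe_add, convexHull_add]

theorem IsLatticePolytope.convex {n : ℕ} {A : Set (Fin n → ℝ)} (hA : IsLatticePolytope A) :
    Convex ℝ A := by
  obtain ⟨V, h1, h2, rfl⟩ := hA
  exact convex_convexHull ℝ _

theorem IsLatticePolytope.compact {n : ℕ} {A : Set (Fin n → ℝ)} (hA : IsLatticePolytope A) :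
    IsCompact A := by
  obtain ⟨V, h1, h2, rfl⟩ := hA
  exact V.finite_toSet.isCompact_convexHull ℝ

theorem IsLatticePolytope.nonempty {n : ℕ} {A : Set (Fin n → ℝ)} (hA : IsLatticePolytope A) :
    A.Nonempty := by
  obtain ⟨V, h1, h2, rfl⟩ := hA
  exact convexHull_nonempty_iff.mpr h1

theorem IsLatticePolytope.zero_smul {n : ℕ} {A : Set (Fin n → ℝ)} (hA : IsLatticePolytope A) :
    (0 : ℝ) • A = 0 := Set.zero_smul_set hA.nonempty

theorem IsLatticePolytope.succ_smul {n : ℕ} {A : Set (Fin n → ℝ)} (hA : IsLatticePolytope A)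
    (k : ℕ) : ((k + 1 : ℕ) : ℝ) • A = (k : ℝ) • A + A := by
  rw [Nat.cast_succ, hA.convex.add_smul (by positivity) (by positivity), one_smul]

theorem IsLatticePolytope.smul {n : ℕ} {A : Set (Fin n → ℝ)} (hA : IsLatticePolytope A)
    (k : ℕ) : IsLatticePolytope ((k : ℝ) • A) := by
  induction k with
  | zero => rw [Nat.cast_zero, hA.zero_smul]; exact .zero
  | succ k ih => rw [hA.succ_smul]; exact ih.add hA

theorem IsLatticePolytope.sum {n : ℕ} {ι : Type*} {P : ι → Set (Fin n → ℝ)}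
    (hP : ∀ i, IsLatticePolytope (P i)) (s : Finset ι) : IsLatticePolytope (∑ i ∈ s, P i) := by
  classical
  induction s using Finset.induction_on with
  | empty => simpa using .zero
  | insert i s hi ih => rw [Finset.sum_insert hi]; exact (hP i).add ih

noncomputable def latCnt {n : ℕ} (Q : Set (Fin n → ℝ)) : ℝ := ({x ∈ Q | IsLatticePt x}).ncard

noncomputable def altD {n : ℕ} (s : Finset ℕ) (P : ℕ → Set (Fin n → ℝ)) (Q : Set (Fin n → ℝ)) : ℝ :=
  ∑ I ∈ s.powerset, (-1 : ℝ) ^ I.card * latCnt (Q + ∑ i ∈ I, P i)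

theorem altD_congr {n : ℕ} {s : Finset ℕ} {P P' : ℕ → Set (Fin n → ℝ)} {Q : Set (Fin n → ℝ)}
    (h : ∀ i ∈ s, P i = P' i) : altD s P Q = altD s P' Q := by
  refine Finset.sum_congr rfl fun I hI => ?_
  rw [Finset.sum_congr rfl fun i hi => h i (Finset.mem_powerset.mp hI hi)]

theorem altD_insert {n : ℕ} {s : Finset ℕ} {i : ℕ} (hi : i ∉ s) (P : ℕ → Set (Fin n → ℝ))
    (Q : Set (Fin n → ℝ)) : altD (insert i s) P Q = altD s P Q - altD s P (Q + P i) := by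
  rw [altD, Finset.sum_powerset_insert hi, altD, altD, sub_eq_add_neg, ← Finset.sum_neg_distrib]
  congr 1
  refine Finset.sum_congr rfl fun I hI => ?_
  have : i ∉ I := fun h => hi (Finset.mem_powerset.mp hI h)
  rw [Finset.card_insert_of_notMem this, Finset.sum_insert this, pow_succ, add_assoc]
  ring

theorem sum_finset_map {κ ι : Type*} [Fintype κ] [DecidableEq κ] [DecidableEq ι] (e : κ ↪ ι)
    (F : Finset ι → ℝ) :
    ∑ I : Finset κ, F (I.map e) = ∑ I ∈ (Finset.univ.map e).powerset, F I := by
  refine Finset.sum_bij (fun I _ => I.map e) ?_ ?_ ?_ ?_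
  · intro I _
    exact Finset.mem_powerset.mpr (Finset.map_subset_map.mpr (Finset.subset_univ I))
  · intro I _ J _ h
    exact Finset.map_injective e h
  · intro J hJ
    obtain ⟨I, -, rfl⟩ := Finset.subset_map_iff.mp (Finset.mem_powerset.mp hJ)
    exact ⟨I, Finset.mem_univ _, rfl⟩
  · intro I _; rfl

theorem altD_zero_base {n : ℕ} {s : Finset ℕ} (hs : n < s.card) {P : ℕ → Set (Fin n → ℝ)}
    (hP : ∀ i, IsLatticePolytope (P i)) : altD s P 0 = 0 := by
  have h := lattice_alternating (κ := s) (fun i => P i) (fun i => hP i) (by simpa using hs)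
  have h2 := sum_finset_map (Function.Embedding.subtype (· ∈ s))
    (fun I => (-1 : ℝ) ^ I.card * latCnt (∑ i ∈ I, P i))
  have h3 : (Finset.univ : Finset s).map (Function.Embedding.subtype (· ∈ s)) = s := by
    ext x; simp
  rw [h3] at h2
  simp only [altD, zero_add]
  rw [← h2, ← h]
  refine Finset.sum_congr rfl fun I _ => ?_
  simp [latCnt]

theorem altD_eq_zero {n : ℕ} {s : Finset ℕ} (hs : n < s.card) {P : ℕ → Set (Fin n → ℝ)}
    (hP : ∀ i, IsLatticePolytope (P i)) {Q : Set (Fin n → ℝ)} (hQ : IsLatticePolytope Q) :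
    altD s P Q = 0 := by
  obtain ⟨i, hi⟩ := Infinite.exists_notMem_finset s
  have hP' : ∀ j, IsLatticePolytope (Function.update P i Q j) := by
    intro j
    by_cases h : j = i
    · subst h; simpa
    · simpa [h] using hP j
  have h1 := altD_insert hi (Function.update P i Q) 0
  rw [altD_zero_base (by rw [Finset.card_insert_of_notMem hi]; omega) hP',
    altD_zero_base hs hP', Function.update_self, zero_add] at h1
  rw [altD_congr (P' := Function.update P i Q)]
  · linarith
  · intro j hj
    rw [Function.update_of_ne (ne_of_mem_of_not_mem hj hi)]

theorem altD_base {n : ℕ} {s : Finset ℕ} (hs : n ≤ s.card) {P : ℕ → Set (Fin n → ℝ)}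
    (hP : ∀ i, IsLatticePolytope (P i)) {Q A : Set (Fin n → ℝ)} (hQ : IsLatticePolytope Q)
    (hA : IsLatticePolytope A) : altD s P (Q + A) = altD s P Q := by
  obtain ⟨i, hi⟩ := Infinite.exists_notMem_finset s
  have hP' : ∀ j, IsLatticePolytope (Function.update P i A j) := by
    intro j
    by_cases h : j = i
    · subst h; simpa
    · simpa [h] using hP j
  have h1 := altD_insert hi (Function.update P i A) Q
  have hc : ∀ j ∈ s, P j = Function.update P i A j := fun j hj => by
    rw [Function.update_of_ne (ne_of_mem_of_not_mem hj hi)]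
  rw [altD_eq_zero (by rw [Finset.card_insert_of_notMem hi]; omega) hP' hQ,
    Function.update_self, ← altD_congr hc, ← altD_congr hc] at h1
  linarith

theorem isLatticePolytope_update {n : ℕ} {P : ℕ → Set (Fin n → ℝ)}
    (hP : ∀ i, IsLatticePolytope (P i)) (i : ℕ) {A : Set (Fin n → ℝ)} (hA : IsLatticePolytope A) :
    ∀ j, IsLatticePolytope (Function.update P i A j) := by
  intro j
  by_cases h : j = i
  · subst h; simpa
  · simpa [h] using hP j

theorem altD_update {n : ℕ} {s : Finset ℕ} {i : ℕ} (hi : i ∈ s) (P : ℕ → Set (Fin n → ℝ))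
    (A Q : Set (Fin n → ℝ)) : altD s (Function.update P i A) Q =
      altD (s.erase i) P Q - altD (s.erase i) P (Q + A) := by
  conv_lhs => rw [← Finset.insert_erase hi]
  have hc : ∀ j ∈ s.erase i, Function.update P i A j = P j := fun j hj => by
    rw [Function.update_of_ne (Finset.ne_of_mem_erase hj)]
  rw [altD_insert (Finset.notMem_erase i s), Function.update_self, altD_congr hc, altD_congr hc]

theorem altD_smul_one {n : ℕ} {s : Finset ℕ} (hs : s.card = n) {i : ℕ} (hi : i ∈ s)
    {P : ℕ → Set (Fin n → ℝ)} (hP : ∀ i, IsLatticePolytope (P i)) {Q : Set (Fin n → ℝ)}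
    (hQ : IsLatticePolytope Q) (k : ℕ) :
    altD s (Function.update P i ((k : ℝ) • P i)) Q = k * altD s P Q := by
  induction k with
  | zero => rw [altD_update hi, Nat.cast_zero, (hP i).zero_smul, add_zero]; ring
  | succ k ih =>
    have h1 := altD_base hs.ge hP hQ ((hP i).smul k)
    have e1 := altD_update hi P (P i) (Q + (k : ℝ) • P i)
    rw [Function.update_eq_self, h1] at e1
    rw [altD_update hi] at ih
    rw [altD_update hi, (hP i).succ_smul, ← add_assoc]
    push_cast
    linarith

theorem altD_smul {n : ℕ} {s : Finset ℕ} (hs : s.card = n)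
    {P : ℕ → Set (Fin n → ℝ)} (hP : ∀ i, IsLatticePolytope (P i)) (k : ℕ) :
    altD s (fun i => (k : ℝ) • P i) 0 = k ^ n * altD s P 0 := by
  have main : ∀ t ⊆ s, altD s (fun i => if i ∈ t then (k : ℝ) • P i else P i) 0 =
      k ^ t.card * altD s P 0 := by
    intro t
    induction t using Finset.induction_on with
    | empty => intro _; simp
    | insert i t hi ih =>
      intro hsub
      have hP' : ∀ j, IsLatticePolytope (if j ∈ t then (k : ℝ) • P j else P j) := by
        intro j
        split_ifs
        · exact (hP j).smul k
        · exact hP j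
      have h1 := altD_smul_one hs (hsub (Finset.mem_insert_self i t)) hP' .zero k
      rw [ih (fun x hx => hsub (Finset.mem_insert_of_mem hx))] at h1
      rw [Finset.card_insert_of_notMem hi, pow_succ]
      have h2 : (fun j => if j ∈ insert i t then (k : ℝ) • P j else P j) =
          Function.update (fun j => if j ∈ t then (k : ℝ) • P j else P j) i
            ((k : ℝ) • (if i ∈ t then (k : ℝ) • P i else P i)) := by
        funext j
        by_cases hj : j = i
        · subst hj; simp [hi]
        · simp [hj]
      rw [h2, h1]; ring
  have := main s subset_rfl
  rw [hs] at this
  rw [← this]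
  exact altD_congr fun i hi => by simp [hi]

theorem latCnt_tendsto {n : ℕ} {A : Set (Fin n → ℝ)} (hA : IsLatticePolytope A) :
    Filter.Tendsto (fun k : ℕ => latCnt ((k : ℝ) • A) / (k : ℝ) ^ n) Filter.atTop
      (nhds (volume A).toReal) := by
  have h := tendsto_card_div_pow_atTop_volume A hA.compact.isBounded
    hA.compact.isClosed.measurableSet (hA.convex.addHaar_frontier volume)
  rw [Fintype.card_fin] at h
  refine h.congr' ?_
  filter_upwards [Filter.eventually_ne_atTop 0] with k hk
  have hk' : (k : ℝ) ≠ 0 := by exact_mod_cast hk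
  congr 2
  rw [← Nat.card_coe_set_eq]
  refine Nat.card_congr (Equiv.subtypeEquiv (Equiv.smulRight hk') fun x => ?_)
  rw [Set.mem_inter_iff, Equiv.smulRight_apply]
  change _ ↔ (k : ℝ) • x ∈ (k : ℝ) • A ∧ IsLatticePt ((k : ℝ) • x)
  rw [Set.smul_mem_smul_set_iff₀ hk', isLatticePt_iff, Set.mem_inv_smul_set_iff₀ hk']
  rfl

theorem fin_alt {n : ℕ} (P : Fin n → Set (Fin n → ℝ)) (hP : ∀ i, IsLatticePolytope (P i)) (k : ℕ) :
    ∑ I : Finset (Fin n), (-1 : ℝ) ^ (n - I.card) * latCnt ((k : ℝ) • ∑ i ∈ I, P i) =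
      (k : ℝ) ^ n * ∑ I : Finset (Fin n), (-1 : ℝ) ^ (n - I.card) * latCnt (∑ i ∈ I, P i) := by
  let P' : ℕ → Set (Fin n → ℝ) := fun i => if h : i < n then P ⟨i, h⟩ else 0
  have hP' : ∀ i, IsLatticePolytope (P' i) := by
    intro i
    simp only [P']
    split_ifs
    · exact hP _
    · exact .zero
  have hs : ((Finset.univ : Finset (Fin n)).map Fin.valEmbedding).card = n := by simp
  have key : ∀ k : ℝ, ∑ I : Finset (Fin n), (-1 : ℝ) ^ (n - I.card) * latCnt (k • ∑ i ∈ I, P i) =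
      (-1) ^ n * altD ((Finset.univ : Finset (Fin n)).map Fin.valEmbedding)
        (fun i => k • P' i) 0 := by
    intro k
    rw [altD, ← sum_finset_map, Finset.mul_sum]
    refine Finset.sum_congr rfl fun I _ => ?_
    have hI : I.card ≤ n := by simpa using Finset.card_le_univ I
    have hsgn : (-1 : ℝ) ^ (n - I.card) = (-1) ^ n * (-1) ^ I.card := by
      obtain ⟨m, hm⟩ := Nat.exists_eq_add_of_le hI
      have hm2 : n - I.card = m := by omega
      have hm3 : (-1 : ℝ) ^ n = (-1) ^ I.card * (-1) ^ m := by rw [← pow_add, ← hm]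
      rw [hm2, hm3]
      have : (-1 : ℝ) ^ I.card * (-1) ^ I.card = 1 := by rw [← mul_pow]; simp
      linear_combination (-(-1 : ℝ) ^ m) * this
    rw [hsgn, Finset.card_map, Finset.sum_map, zero_add, ← Finset.smul_sum]
    simp [P', mul_assoc]
  have k1 := key 1
  simp only [one_smul] at k1
  rw [key k, k1, altD_smul hs hP']
  ring

/-- lattice-point polarization formula for the normalized mixed volume. -/
theorem mixedVol_eq_alternating_sum_lattice_points {n : ℕ}
    (P : Fin n → Set (Fin n → ℝ)) (hP : ∀ i, IsLatticePolytope (P i)) :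
    mixedVol P =
      ∑ I : Finset (Fin n),
        (-1 : ℝ) ^ (n - I.card) * ({x ∈ (∑ i ∈ I, P i) | IsLatticePt x}).ncard := by
  have h1 : Filter.Tendsto (fun k : ℕ => ∑ I : Finset (Fin n), (-1 : ℝ) ^ (n - I.card) *
      (latCnt ((k : ℝ) • ∑ i ∈ I, P i) / (k : ℝ) ^ n)) Filter.atTop (nhds (mixedVol P)) :=
    tendsto_finsetSum _ fun I _ => (latCnt_tendsto (.sum hP I)).const_mul _
  refine tendsto_nhds_unique h1 (tendsto_const_nhds.congr' ?_)
  filter_upwards [Filter.eventually_ne_atTop 0] with k hk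
  have hk' : (k : ℝ) ^ n ≠ 0 := by positivity
  have h2 := fin_alt P hP k
  simp only [← mul_div_assoc]
  rw [← Finset.sum_div, h2, mul_div_cancel_left₀ _ hk']
  rfl
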